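/- Let α ∈ (0,2), β > 0, C₀ ∈ ℝ, and λ₀ ∈ (0,1] be such that 2β/(2−α) + C₀ μ^{2−α} > 0 for all μ ∈ (0, λ₀]. Define 𝓕(λ) := ∫_λ^{λ₀} μ^{−(α/2+1)} (2β/(2−α) + C₀ μ^{2−α})^{−1/2} dμ for λ ∈ (0, λ₀]. Then there exists C > 0 such that for all λ ∈ (0, λ₀]: |𝓕(λ) − (2/α) λ^{−α/2} (2β/(2−α))^{−1/2}| ≤ C (λ^{−α/4} + λ^{2 − (3/2)α}). -/

import Mathlib

open Filter intervalIntegral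
open scoped Topology

noncomputable section

/-!
Put `g μ = (A + c * μ ^ p) ^ s`. Since `g μ - A ^ s = O(μ ^ p)`, replacing `g` by the constant
`A ^ s` changes `∫ μ in x..b, μ ^ (-(a + 1)) * g μ` by `O(∫ μ in x..b, μ ^ (p - a - 1))`, and the
integral with the constant is explicit. The error integral is `O(x ^ (p - a))` if `p < a`, bounded
if `p > a` and logarithmic if `p = a`; a summand `x ^ (-ε)` with `ε > 0` absorbs the last two cases.
-/

section PowerIntegrals

open Set Asymptotics MeasureTheory

variable {E : Type*} [NormedAddCommGroup E] {a b p q ε : ℝ}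

lemma continuousOn_rpow_const_uIcc {x y : ℝ} (hx : 0 < x) (hy : 0 < y) (r : ℝ) :
    ContinuousOn (fun μ : ℝ => μ ^ r) (uIcc x y) :=
  continuousOn_id.rpow_const fun _ hμ => Or.inl ((lt_min hx hy).trans_le hμ.1).ne'

lemma integral_rpow_nonneg {x y : ℝ} (hx : 0 ≤ x) (hxy : x ≤ y) (r : ℝ) :
    0 ≤ ∫ μ in x..y, μ ^ r :=
  integral_nonneg hxy fun _ hμ => Real.rpow_nonneg (hx.trans hμ.1) r

lemma integral_rpow_neg_add_one {x y : ℝ} (ha : a ≠ 0) (hx : 0 < x) (hy : 0 < y) :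
    ∫ μ in x..y, μ ^ (-(a + 1)) = a⁻¹ * x ^ (-a) - a⁻¹ * y ^ (-a) := by
  have hne : -(a + 1) ≠ -1 := fun h => ha (by linarith)
  rw [integral_rpow (Or.inr ⟨hne, notMem_uIcc_of_lt hx hy⟩), show -(a + 1) + 1 = -a by ring]
  field_simp
  ring

lemma isBigO_const_rpow_neg (v : E) (hε : 0 ≤ ε) :
    (fun _ : ℝ => v) =O[𝓟 (Ioc 0 b)] fun x => x ^ (-ε) := by
  refine isBigO_principal.2 ⟨‖v‖ * b ^ ε, fun x ⟨hx, hxb⟩ => ?_⟩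
  have hone : 1 ≤ b ^ ε * x ^ (-ε) := by
    rw [Real.rpow_neg hx.le, ← div_eq_mul_inv, one_le_div (Real.rpow_pos_of_pos hx ε)]
    exact Real.rpow_le_rpow hx.le hxb hε
  rw [Real.norm_of_nonneg (Real.rpow_nonneg hx.le _), mul_assoc]
  exact le_mul_of_one_le_right (norm_nonneg v) hone

lemma integral_rpow_sub_one_le {t x : ℝ} (htq : t ≤ q) (ht : t < 0) (hx : 0 < x) (hxb : x ≤ b) :
    ∫ μ in x..b, μ ^ (q - 1) ≤ b ^ (q - t) * ((-t)⁻¹ * x ^ t) := by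
  have hb : 0 < b := hx.trans_le hxb
  calc ∫ μ in x..b, μ ^ (q - 1)
      ≤ ∫ μ in x..b, b ^ (q - t) * μ ^ (-(-t + 1)) := by
        refine integral_mono_on hxb (continuousOn_rpow_const_uIcc hx hb _).intervalIntegrable
          (continuousOn_const.mul (continuousOn_rpow_const_uIcc hx hb _)).intervalIntegrable
          fun μ hμ => ?_
        have hμ0 : 0 < μ := hx.trans_le hμ.1
        rw [show q - 1 = (q - t) + -(-t + 1) by ring, Real.rpow_add hμ0]
        gcongr
        exact hμ.2
    _ = b ^ (q - t) * ((-t)⁻¹ * x ^ t - (-t)⁻¹ * b ^ t) := by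
        rw [intervalIntegral.integral_const_mul,
          integral_rpow_neg_add_one (neg_ne_zero.2 ht.ne) hx hb, neg_neg]
    _ ≤ b ^ (q - t) * ((-t)⁻¹ * x ^ t) := by
        have : 0 < -t := neg_pos.2 ht
        have hbt : 0 ≤ (-t)⁻¹ * b ^ t := by positivity
        gcongr
        exact sub_le_self _ hbt

lemma isBigO_integral_rpow_sub_one (hε : 0 < ε) :
    (fun x => ∫ μ in x..b, μ ^ (q - 1)) =O[𝓟 (Ioc 0 b)] fun x => x ^ (-ε) + x ^ q := by
  set t := min (-ε) q
  have ht : t < 0 := (min_le_left _ _).trans_lt (neg_lt_zero.2 hε)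
  refine isBigO_principal.2 ⟨b ^ (q - t) * (-t)⁻¹, fun x ⟨hx, hxb⟩ => ?_⟩
  have hb : 0 < b := hx.trans_le hxb
  have hsum : x ^ t ≤ x ^ (-ε) + x ^ q := by
    rcases min_choice (-ε) q with h | h <;> simp only [t, h]
    · exact le_add_of_nonneg_right (Real.rpow_nonneg hx.le _)
    · exact le_add_of_nonneg_left (Real.rpow_nonneg hx.le _)
  rw [Real.norm_of_nonneg (integral_rpow_nonneg hx.le hxb _), Real.norm_of_nonneg (by positivity)]
  have : 0 < -t := neg_pos.2 ht
  calc ∫ μ in x..b, μ ^ (q - 1) ≤ b ^ (q - t) * ((-t)⁻¹ * x ^ t) :=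
        integral_rpow_sub_one_le (min_le_right _ _) ht hx hxb
    _ ≤ b ^ (q - t) * (-t)⁻¹ * (x ^ (-ε) + x ^ q) := by
        rw [mul_assoc]
        gcongr

lemma add_mul_rpow_mem_uIcc {A c μ : ℝ} (hp : 0 ≤ p) (hμ : μ ∈ Icc 0 b) :
    A + c * μ ^ p ∈ uIcc A (A + c * b ^ p) := by
  have hμ0 : 0 ≤ μ ^ p := Real.rpow_nonneg hμ.1 p
  have hμb : μ ^ p ≤ b ^ p := Real.rpow_le_rpow hμ.1 hμ.2 hp
  rw [mem_uIcc]
  rcases le_total 0 c with hc | hc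
  · exact Or.inl ⟨le_add_of_nonneg_right (mul_nonneg hc hμ0), by gcongr⟩
  · exact Or.inr ⟨add_le_add_right (mul_le_mul_of_nonpos_left hμb hc) A,
      add_le_of_nonpos_right (mul_nonpos_of_nonpos_of_nonneg hc hμ0)⟩

lemma isBigO_comp_add_mul_rpow_sub {f : ℝ → E} {A c : ℝ} {K : NNReal} (hp : 0 ≤ p)
    (hf : LipschitzOnWith K f (uIcc A (A + c * b ^ p))) :
    (fun μ => f (A + c * μ ^ p) - f A) =O[𝓟 (Ioc 0 b)] fun μ => μ ^ p := by
  refine isBigO_principal.2 ⟨K * |c|, fun μ hμ => ?_⟩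
  calc ‖f (A + c * μ ^ p) - f A‖ ≤ K * ‖A + c * μ ^ p - A‖ :=
        hf.norm_sub_le (add_mul_rpow_mem_uIcc hp (Ioc_subset_Icc_self hμ)) left_mem_uIcc
    _ = K * |c| * ‖μ ^ p‖ := by
        rw [add_sub_cancel_left, norm_mul, Real.norm_eq_abs c, mul_assoc]

variable [NormedSpace ℝ E]

lemma isBigO_integral_rpow_smul {h : ℝ → E} (hε : 0 < ε)
    (hh : h =O[𝓟 (Ioc 0 b)] fun μ => μ ^ p) :
    (fun x => ∫ μ in x..b, μ ^ (-(a + 1)) • h μ) =O[𝓟 (Ioc 0 b)]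
      fun x => x ^ (-ε) + x ^ (p - a) := by
  obtain ⟨K, hK⟩ := isBigO_principal.1 hh
  refine IsBigO.trans (isBigO_principal.2 ⟨K, fun x ⟨hx, hxb⟩ => ?_⟩)
    (isBigO_integral_rpow_sub_one hε)
  rw [Real.norm_of_nonneg (integral_rpow_nonneg hx.le hxb _), ← intervalIntegral.integral_const_mul]
  refine norm_integral_le_of_norm_le hxb (Eventually.of_forall fun μ hμ => ?_)
    (continuousOn_const.mul
      (continuousOn_rpow_const_uIcc hx (hx.trans_le hxb) _)).intervalIntegrable
  have hμ0 : 0 < μ := hx.trans hμ.1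
  calc ‖μ ^ (-(a + 1)) • h μ‖ = μ ^ (-(a + 1)) * ‖h μ‖ := by
        rw [norm_smul, Real.norm_of_nonneg (Real.rpow_nonneg hμ0.le _)]
    _ ≤ μ ^ (-(a + 1)) * (K * μ ^ p) := by
        gcongr
        simpa only [Real.norm_of_nonneg (Real.rpow_nonneg hμ0.le p)] using hK μ ⟨hμ0, hμ.2⟩
    _ = K * μ ^ (p - a - 1) := by
        rw [mul_left_comm, ← Real.rpow_add hμ0, show -(a + 1) + p = p - a - 1 by ring]

theorem isBigO_integral_rpow_smul_sub [CompleteSpace E] {g : ℝ → E} {v : E} (ha : a ≠ 0)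
    (hε : 0 < ε) (hint : ∀ x ∈ Ioc 0 b, IntervalIntegrable g volume x b)
    (hg : (fun μ => g μ - v) =O[𝓟 (Ioc 0 b)] fun μ => μ ^ p) :
    (fun x => (∫ μ in x..b, μ ^ (-(a + 1)) • g μ) - (a⁻¹ * x ^ (-a)) • v) =O[𝓟 (Ioc 0 b)]
      fun x => x ^ (-ε) + x ^ (p - a) := by
  have hconst : (fun _ => (a⁻¹ * b ^ (-a)) • v) =O[𝓟 (Ioc 0 b)]
      fun x => x ^ (-ε) + x ^ (p - a) := by
    refine (isBigO_const_rpow_neg _ hε.le).trans (isBigO_principal.2 ⟨1, fun x hx => ?_⟩)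
    have := hx.1
    rw [Real.norm_of_nonneg (by positivity), Real.norm_of_nonneg (by positivity), one_mul]
    exact le_add_of_nonneg_right (by positivity)
  refine ((isBigO_integral_rpow_smul hε hg).sub hconst).congr' ?_ EventuallyEq.rfl
  refine eventually_principal.2 fun x hx => ?_
  have hb : 0 < b := hx.1.trans_le hx.2
  have hcont := continuousOn_rpow_const_uIcc hx.1 hb (-(a + 1))
  have hintv : IntervalIntegrable (fun μ => μ ^ (-(a + 1)) • v) volume x b :=
    (hcont.smul continuousOn_const).intervalIntegrable
  simp only [smul_sub]
  rw [integral_sub ((hint x hx).continuousOn_smul hcont) hintv,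
    intervalIntegral.integral_smul_const, integral_rpow_neg_add_one ha hx.1 hb, sub_smul]
  abel

theorem F_expansion_general {A c : ℝ} (s : ℝ) (ha : a ≠ 0) (hp : 0 ≤ p) (hε : 0 < ε) (hA : 0 < A)
    (hb : 0 < b) (hpos : ∀ μ ∈ Ioc 0 b, 0 < A + c * μ ^ p) :
    ∃ C : ℝ, 0 < C ∧ ∀ x ∈ Ioc 0 b,
      |(∫ μ in x..b, μ ^ (-(a + 1)) * (A + c * μ ^ p) ^ s) - a⁻¹ * x ^ (-a) * A ^ s|
        ≤ C * (x ^ (-ε) + x ^ (p - a)) := by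
  have hne : ∀ y ∈ uIcc A (A + c * b ^ p), y ≠ 0 := fun y hy =>
    ((lt_min hA (hpos b (right_mem_Ioc.2 hb))).trans_le hy.1).ne'
  obtain ⟨K, hK⟩ : ∃ K, LipschitzOnWith K (fun y : ℝ => y ^ s) (uIcc A (A + c * b ^ p)) :=
    (contDiffOn_id.rpow_const_of_ne hne).exists_lipschitzOnWith one_ne_zero
      (convex_uIcc _ _) isCompact_uIcc
  have hint : ∀ x ∈ Ioc 0 b,
      IntervalIntegrable (fun μ => (A + c * μ ^ p) ^ s) volume x b := fun x hx => by
    have hbase : ContinuousOn (fun μ => A + c * μ ^ p) (uIcc x b) :=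
      continuousOn_const.add (continuousOn_const.mul (continuousOn_rpow_const_uIcc hx.1 hb p))
    refine (hbase.rpow_const fun μ hμ => Or.inl ?_).intervalIntegrable
    rw [uIcc_of_le hx.2] at hμ
    exact (hpos μ ⟨hx.1.trans_le hμ.1, hμ.2⟩).ne'
  obtain ⟨C, hC, hbound⟩ := (isBigO_integral_rpow_smul_sub ha hε hint
    (isBigO_comp_add_mul_rpow_sub hp hK)).exists_pos
  refine ⟨C, hC, fun x hx => ?_⟩
  have hx0 := hx.1
  simpa only [smul_eq_mul, Real.norm_eq_abs,
    abs_of_nonneg (show 0 ≤ x ^ (-ε) + x ^ (p - a) by positivity)] using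
    isBigOWith_principal.1 hbound x hx

end PowerIntegrals

theorem F_expansion (α β C₀ lam₀ : ℝ) (hα0 : 0 < α) (hα2 : α < 2) (hβ : 0 < β)
    (hlam₀0 : 0 < lam₀) (hlam₀1 : lam₀ ≤ 1)
    (hpos : ∀ μ ∈ Set.Ioc (0:ℝ) lam₀, 0 < 2*β/(2-α) + C₀ * μ ^ (2-α)) :
    ∃ C : ℝ, 0 < C ∧ ∀ lam ∈ Set.Ioc (0:ℝ) lam₀,
      |(∫ μ in lam..lam₀, μ ^ (-(α/2+1)) * (2*β/(2-α) + C₀ * μ ^ (2-α)) ^ (-(1:ℝ)/2))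
          - (2/α) * lam ^ (-(α/2)) * (2*β/(2-α)) ^ (-(1:ℝ)/2)|
        ≤ C * (lam ^ (-(α/4)) + lam ^ (2 - (3/2)*α)) := by
  have hp : 0 < 2 - α := sub_pos.2 hα2
  simpa only [inv_div, show 2 - α - α / 2 = 2 - (3 / 2) * α by ring] using
    F_expansion_general (-(1:ℝ)/2) (half_pos hα0).ne' hp.le (by positivity : 0 < α / 4)
      (by positivity) hlam₀0 hpos
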